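/- As α → 1, the relative α-entropy I_α(p,q) converges to the Kullback-Leibler divergence I(p,q) = Σ_x p(x) log(p(x)/q(x)). -/

import Mathlib

open Real Filter

/-- As α → 1, the relative α-entropy converges to the KL divergence. -/
theorem relAlphaEntropy_tendsto_KL {X : Type*} [Fintype X]
    (p q : X → ℝ) (hp : ∀ x, 0 < p x) (hq : ∀ x, 0 < q x)
    (hps : ∑ x, p x = 1) (hqs : ∑ x, q x = 1) :
    Tendsto (fun α : ℝ =>
        (α / (1 - α)) * Real.log (∑ x, p x * (q x) ^ (α - 1))
          - (1 / (1 - α)) * Real.log (∑ x, (p x) ^ α)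
          + Real.log (∑ x, (q x) ^ α))
      (nhdsWithin 1 {1}ᶜ)
      (nhds (∑ x, p x * Real.log (p x / q x))) := by
  have hF : HasDerivAt (fun α : ℝ => Real.log (∑ x, p x * (q x) ^ (α - 1)))
      (∑ x, p x * Real.log (q x)) 1 := by
    have h1 : HasDerivAt (fun α : ℝ => ∑ x, p x * (q x) ^ (α - 1))
        (∑ x, p x * Real.log (q x)) 1 := by
      apply HasDerivAt.fun_sum
      intro x _
      have h := (((hasDerivAt_id (1:ℝ)).sub_const 1).const_rpow (hq x)).const_mul (p x)
      simpa using h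
    have h2 := h1.log (by simp [hps])
    simpa [hps] using h2
  have hG : ∀ r : X → ℝ, (∀ x, 0 < r x) → ∑ x, r x = 1 →
      HasDerivAt (fun α : ℝ => Real.log (∑ x, (r x) ^ α))
      (∑ x, r x * Real.log (r x)) 1 := by
    intro r hr hrs
    have h1 : HasDerivAt (fun α : ℝ => ∑ x, (r x) ^ α)
        (∑ x, r x * Real.log (r x)) 1 := by
      apply HasDerivAt.fun_sum
      intro x _
      have h := (hasDerivAt_id (1:ℝ)).const_rpow (hr x)
      simpa [mul_comm] using h
    have h2 := h1.log (by simp [hrs])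
    simpa [hrs] using h2
  have hFs := hasDerivAt_iff_tendsto_slope.1 hF
  have hGs := hasDerivAt_iff_tendsto_slope.1 (hG p hp hps)
  have hH : Tendsto (fun α : ℝ => Real.log (∑ x, (q x) ^ α)) (nhdsWithin 1 {1}ᶜ) (nhds 0) := by
    have h := (hG q hq hqs).continuousAt.tendsto
    simp only [Real.rpow_one, hqs, Real.log_one] at h
    exact h.mono_left nhdsWithin_le_nhds
  have hid : Tendsto (fun α : ℝ => α) (nhdsWithin 1 {1}ᶜ) (nhds 1) :=
    tendsto_id.mono_left nhdsWithin_le_nhds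
  have key := (hGs.sub (hid.mul hFs)).add hH
  have hval : (∑ x, p x * Real.log (p x)) - 1 * (∑ x, p x * Real.log (q x)) + 0
      = ∑ x, p x * Real.log (p x / q x) := by
    rw [one_mul, add_zero, ← Finset.sum_sub_distrib]
    refine Finset.sum_congr rfl fun x _ => ?_
    rw [Real.log_div (hp x).ne' (hq x).ne']
    ring
  rw [hval] at key
  refine key.congr' ?_
  filter_upwards [self_mem_nhdsWithin] with α hα
  have h1 : α - 1 ≠ 0 := sub_ne_zero.2 hα
  have h2 : (1 : ℝ) - α = -(α - 1) := by ring
  simp only [slope_def_field, sub_self, Real.rpow_zero, mul_one, Real.rpow_one, hps,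
    Real.log_one, sub_zero, h2]
  field_simp
  ring
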